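/- Filtered Schmidt witnesses: let d ≥ 2, 1 ≤ n < d, and let a_1, …, a_d ≥ 0 with Σ_i a_i² = 1; set ψ = Σ_i a_i |ii⟩. Then for every positive semidefinite matrix σ on ℂ^d ⊗ ℂ^d of Schmidt number at most n, Re(Tr(σ · Σ_{i,j} a_i a_j |ij⟩⟨ij|)) ≥ (1/n) · ψ† σ ψ; equivalently, W_{n+1} = Σ_{i,j} a_i a_j |ij⟩⟨ij| − (1/n) ψψ† satisfies Re(Tr(W_{n+1} σ)) ≥ 0 for all such σ. -/

import Mathlib

open Matrix BigOperators Kronecker ComplexOrder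

/-- The d×d matrix `M_v` associated with a vector `v` on ℂ^d ⊗ ℂ^d, `(M_v)_{ij} = v (i,j)`. -/
def toMat (d : ℕ) (v : Fin d × Fin d → ℂ) : Matrix (Fin d) (Fin d) ℂ :=
  Matrix.of fun i j => v (i, j)

/-- `ρ` has Schmidt number at most `n`: it is a finite sum of `w wᴴ` with each `w` of
Schmidt rank (i.e. rank of the associated d×d matrix) at most `n`. -/
def SchmidtNumberLE (d : ℕ) (ρ : Matrix (Fin d × Fin d) (Fin d × Fin d) ℂ) (n : ℕ) : Prop :=
  ∃ (k : ℕ) (w : Fin k → (Fin d × Fin d → ℂ)),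
    (∀ i, (toMat d (w i)).rank ≤ n) ∧
    ρ = ∑ i, Matrix.vecMulVec (w i) (star (w i))

/-- The vector `Σ_i a_i |ii⟩`. -/
noncomputable def ketDiag (d : ℕ) (a : Fin d → ℝ) : Fin d × Fin d → ℂ :=
  fun p => if p.1 = p.2 then ((a p.1 : ℝ) : ℂ) else 0

/-!
A matrix `A` satisfies `|tr A|² ≤ rank A · ‖A‖²` in the Frobenius norm: if `P` is the orthogonal
projection onto the range of `A`, then `tr A = tr (P A)` and `‖P‖² = tr P = rank A`, so this is
Cauchy–Schwarz. For a vector `w`, the overlap `ψ† w = ∑ i, a i * w (i, i)` is the trace of `M_w`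
multiplied on both sides by diagonal filters with entries of modulus `√|a i|`. Filtering does not
increase the rank and weights `|w (i, j)|²` by `|a i * a j|`, which gives the inequality for
`σ = w w†`. Both sides are linear in `σ`.
-/

section

variable {m n 𝕜 : Type*} [Fintype m] [Fintype n] [RCLike 𝕜]

theorem trace_vecMulVec_mul {R : Type*} [CommSemiring R] (u : m → R) (v : n → R)
    (A : Matrix n m R) : (vecMulVec u v * A).trace = v ⬝ᵥ A *ᵥ u := by
  rw [vecMulVec_mul, trace_vecMulVec, dotProduct_comm, dotProduct_mulVec]

theorem trace_conjTranspose_mul_self_eq_sum (A : Matrix m n 𝕜) :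
    (Aᴴ * A).trace = ((∑ i, ∑ j, ‖A i j‖ ^ 2 : ℝ) : 𝕜) := by
  rw [Finset.sum_comm]
  simp [trace, mul_apply, RCLike.conj_mul]

theorem norm_trace_mul_sq_le (A : Matrix m n 𝕜) (B : Matrix n m 𝕜) :
    ‖(A * B).trace‖ ^ 2 ≤ (∑ i, ∑ j, ‖A i j‖ ^ 2) * ∑ j, ∑ i, ‖B j i‖ ^ 2 := by
  have htri : ‖(A * B).trace‖ ≤ ∑ p : m × n, ‖A p.1 p.2‖ * ‖B p.2 p.1‖ := by
    simp only [trace, diag_apply, mul_apply, ← Fintype.sum_prod_type', ← norm_mul]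
    exact norm_sum_le _ _
  calc ‖(A * B).trace‖ ^ 2
      ≤ (∑ p : m × n, ‖A p.1 p.2‖ * ‖B p.2 p.1‖) ^ 2 := by gcongr
    _ ≤ (∑ p : m × n, ‖A p.1 p.2‖ ^ 2) * ∑ p : m × n, ‖B p.2 p.1‖ ^ 2 :=
      Finset.sum_mul_sq_le_sq_mul_sq _ _ _
    _ = (∑ i, ∑ j, ‖A i j‖ ^ 2) * ∑ j, ∑ i, ‖B j i‖ ^ 2 := by
      rw [Fintype.sum_prod_type, Fintype.sum_prod_type_right]

theorem exists_isStarProjection_mul_eq_self (A : Matrix m n 𝕜) :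
    ∃ P : Matrix m m 𝕜, IsStarProjection P ∧ P * A = A ∧ P.trace = A.rank := by
  classical
  let S := LinearMap.range (toEuclideanLin A)
  let P := (toEuclideanCLM (n := m) (𝕜 := 𝕜)).symm S.starProjection
  have hP : toEuclideanLin P = S.starProjection.toLinearMap := by
    rw [← coe_toEuclideanCLM_eq_toEuclideanLin, StarAlgEquiv.apply_symm_apply]
  have hfix : ∀ y ∈ S, S.starProjection y = y := fun y ↦ Submodule.starProjection_eq_self_iff.2
  refine ⟨P, isStarProjection_starProjection.map (toEuclideanCLM (n := m) (𝕜 := 𝕜)).symm, ?_, ?_⟩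
  · refine toEuclideanLin.injective (LinearMap.ext fun x ↦ ?_)
    rw [toLpLin_mul_same, hP]
    exact hfix _ ⟨x, rfl⟩
  · have hproj : LinearMap.IsProj S (toEuclideanLin P) :=
      hP ▸ ⟨S.starProjection_apply_mem, hfix⟩
    calc P.trace = LinearMap.trace 𝕜 _ (toEuclideanLin P) := by
          rw [toEuclideanLin_eq_toLin_orthonormal, trace_toLin_eq]
      _ = Module.finrank 𝕜 S := hproj.trace
      _ = A.rank := by
          rw [rank_eq_finrank_range_toLin A (EuclideanSpace.basisFun m 𝕜).toBasis
            (EuclideanSpace.basisFun n 𝕜).toBasis, ← toEuclideanLin_eq_toLin_orthonormal]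

theorem norm_trace_sq_le_rank_mul (A : Matrix n n 𝕜) :
    ‖A.trace‖ ^ 2 ≤ A.rank * ∑ i, ∑ j, ‖A i j‖ ^ 2 := by
  obtain ⟨P, hP, hPA, htrace⟩ := exists_isStarProjection_mul_eq_self A
  have hPnorm : ∑ i, ∑ j, ‖P i j‖ ^ 2 = (A.rank : ℝ) := by
    have hPP : Pᴴ * P = P := by
      rw [← star_eq_conjTranspose, hP.isSelfAdjoint.star_eq, hP.isIdempotentElem.eq]
    have hsum := trace_conjTranspose_mul_self_eq_sum P
    rw [hPP, htrace] at hsum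
    exact_mod_cast hsum.symm
  calc ‖A.trace‖ ^ 2 = ‖(P * A).trace‖ ^ 2 := by rw [hPA]
    _ ≤ (∑ i, ∑ j, ‖P i j‖ ^ 2) * ∑ i, ∑ j, ‖A i j‖ ^ 2 := norm_trace_mul_sq_le P A
    _ = A.rank * ∑ i, ∑ j, ‖A i j‖ ^ 2 := by rw [hPnorm]

theorem norm_sum_mul_diag_mul_sq_le (A : Matrix n n 𝕜) (u v : n → 𝕜) :
    ‖∑ i, u i * A i i * v i‖ ^ 2 ≤ A.rank * ∑ i, ∑ j, ‖u i‖ ^ 2 * ‖A i j‖ ^ 2 * ‖v j‖ ^ 2 := by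
  classical
  have hrank : (diagonal u * A * diagonal v).rank ≤ A.rank :=
    (rank_mul_le_left _ _).trans (rank_mul_le_right _ _)
  calc ‖∑ i, u i * A i i * v i‖ ^ 2 = ‖(diagonal u * A * diagonal v).trace‖ ^ 2 := by
        simp [trace]
    _ ≤ (diagonal u * A * diagonal v).rank *
          ∑ i, ∑ j, ‖(diagonal u * A * diagonal v) i j‖ ^ 2 := norm_trace_sq_le_rank_mul _
    _ = (diagonal u * A * diagonal v).rank *
          ∑ i, ∑ j, ‖u i‖ ^ 2 * ‖A i j‖ ^ 2 * ‖v j‖ ^ 2 := by simp [mul_pow]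
    _ ≤ A.rank * ∑ i, ∑ j, ‖u i‖ ^ 2 * ‖A i j‖ ^ 2 * ‖v j‖ ^ 2 := by gcongr

theorem exists_mul_eq_and_norm_sq_eq_norm (z : 𝕜) :
    ∃ x y : 𝕜, x * y = z ∧ ‖x‖ ^ 2 = ‖z‖ ∧ ‖y‖ ^ 2 = ‖z‖ := by
  obtain rfl | hz := eq_or_ne z 0
  · exact ⟨0, 0, by simp⟩
  have hsqrt : ((√‖z‖ : ℝ) : 𝕜) ≠ 0 := by simpa using hz
  refine ⟨(√‖z‖ : ℝ), z / (√‖z‖ : ℝ), mul_div_cancel₀ z hsqrt, ?_, ?_⟩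
  · simp
  · rw [norm_div, RCLike.norm_ofReal, abs_of_nonneg (Real.sqrt_nonneg _), Real.div_sqrt,
      Real.sq_sqrt (norm_nonneg z)]

theorem norm_sum_mul_diag_sq_le (A : Matrix n n 𝕜) (c : n → 𝕜) :
    ‖∑ i, c i * A i i‖ ^ 2 ≤ A.rank * ∑ i, ∑ j, ‖c i * c j‖ * ‖A i j‖ ^ 2 := by
  choose u v huv hu hv using fun i ↦ exists_mul_eq_and_norm_sq_eq_norm (c i)
  calc ‖∑ i, c i * A i i‖ ^ 2 = ‖∑ i, u i * A i i * v i‖ ^ 2 := by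
        simp only [← huv, mul_right_comm]
    _ ≤ A.rank * ∑ i, ∑ j, ‖u i‖ ^ 2 * ‖A i j‖ ^ 2 * ‖v j‖ ^ 2 :=
        norm_sum_mul_diag_mul_sq_le A u v
    _ = A.rank * ∑ i, ∑ j, ‖c i * c j‖ * ‖A i j‖ ^ 2 := by
        simp only [hu, hv, norm_mul, mul_right_comm]

theorem star_dotProduct_vecMulVec_star_mulVec (x w : n → 𝕜) :
    star x ⬝ᵥ vecMulVec w (star w) *ᵥ x = ((‖star x ⬝ᵥ w‖ ^ 2 : ℝ) : 𝕜) := by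
  rw [vecMulVec_mulVec, dotProduct_smul, star_dotProduct, op_smul_eq_mul]
  simp [RCLike.mul_conj]

theorem trace_vecMulVec_star_mul_diagonal [DecidableEq n] (w f : n → 𝕜) :
    (vecMulVec w (star w) * diagonal f).trace = ∑ i, f i * ((‖w i‖ ^ 2 : ℝ) : 𝕜) := by
  simp [trace, vecMulVec_apply, RCLike.mul_conj, mul_comm]

end

theorem star_ketDiag_dotProduct (d : ℕ) (a : Fin d → ℝ) (w : Fin d × Fin d → ℂ) :
    star (ketDiag d a) ⬝ᵥ w = ∑ i, (a i : ℂ) * toMat d w i i := by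
  simp [dotProduct, Fintype.sum_prod_type, ketDiag, toMat, apply_ite]

theorem norm_star_ketDiag_dotProduct_sq_le (d : ℕ) (a : Fin d → ℝ) (w : Fin d × Fin d → ℂ) :
    ‖star (ketDiag d a) ⬝ᵥ w‖ ^ 2 ≤
      (toMat d w).rank * ∑ p : Fin d × Fin d, |a p.1 * a p.2| * ‖w p‖ ^ 2 := by
  rw [star_ketDiag_dotProduct, Fintype.sum_prod_type]
  simpa [toMat] using norm_sum_mul_diag_sq_le (toMat d w) (fun i ↦ (a i : ℂ))

theorem SchmidtNumberLE.re_star_ketDiag_dotProduct_mulVec_le {d n : ℕ}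
    {σ : Matrix (Fin d × Fin d) (Fin d × Fin d) ℂ} (hσ : SchmidtNumberLE d σ n) (a : Fin d → ℝ) :
    (star (ketDiag d a) ⬝ᵥ σ *ᵥ ketDiag d a).re ≤
      n * ((σ * diagonal fun p : Fin d × Fin d ↦ ((|a p.1 * a p.2| : ℝ) : ℂ)).trace).re := by
  obtain ⟨k, w, hrank, rfl⟩ := hσ
  simp only [sum_mulVec, dotProduct_sum, Matrix.sum_mul, trace_sum, Complex.re_sum,
    Finset.mul_sum]
  refine Finset.sum_le_sum fun i _ ↦ ?_
  calc (star (ketDiag d a) ⬝ᵥ vecMulVec (w i) (star (w i)) *ᵥ ketDiag d a).re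
      = ‖star (ketDiag d a) ⬝ᵥ w i‖ ^ 2 := by
        rw [star_dotProduct_vecMulVec_star_mulVec]
        exact Complex.ofReal_re _
    _ ≤ (toMat d (w i)).rank * ∑ p : Fin d × Fin d, |a p.1 * a p.2| * ‖w i p‖ ^ 2 :=
        norm_star_ketDiag_dotProduct_sq_le d a (w i)
    _ ≤ n * ∑ p : Fin d × Fin d, |a p.1 * a p.2| * ‖w i p‖ ^ 2 := by
        gcongr
        exact hrank i
    _ = n * ((vecMulVec (w i) (star (w i)) *
          diagonal fun p : Fin d × Fin d ↦ ((|a p.1 * a p.2| : ℝ) : ℂ)).trace).re := by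
        simp [trace_vecMulVec_star_mul_diagonal, -Complex.ofReal_pow]

theorem filtered_schmidt_witness_general {d n : ℕ} (hn : 1 ≤ n) (a : Fin d → ℝ)
    {σ : Matrix (Fin d × Fin d) (Fin d × Fin d) ℂ} (hσ : SchmidtNumberLE d σ n) :
    (1 / (n : ℝ)) * (star (ketDiag d a) ⬝ᵥ σ *ᵥ ketDiag d a).re ≤
        ((σ * diagonal fun p : Fin d × Fin d ↦ ((|a p.1 * a p.2| : ℝ) : ℂ)).trace).re ∧
      0 ≤ ((((diagonal fun p : Fin d × Fin d ↦ ((|a p.1 * a p.2| : ℝ) : ℂ)) -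
        (1 / (n : ℝ)) • vecMulVec (ketDiag d a) (star (ketDiag d a))) * σ).trace).re := by
  have hexpect : (1 / (n : ℝ)) * (star (ketDiag d a) ⬝ᵥ σ *ᵥ ketDiag d a).re ≤
      ((σ * diagonal fun p : Fin d × Fin d ↦ ((|a p.1 * a p.2| : ℝ) : ℂ)).trace).re := by
    rw [one_div, inv_mul_le_iff₀ (by exact_mod_cast hn)]
    exact hσ.re_star_ketDiag_dotProduct_mulVec_le a
  refine ⟨hexpect, ?_⟩
  rw [Matrix.sub_mul, trace_sub, smul_mul, trace_smul, trace_vecMulVec_mul, trace_mul_comm,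
    Complex.sub_re, Complex.smul_re, smul_eq_mul]
  exact sub_nonneg.2 hexpect

/-- Filtered Schmidt witnesses: `W = Σ_{i,j} a_i a_j |ij⟩⟨ij| - (1/n) ψψᴴ` is
nonnegative on every psd matrix of Schmidt number at most `n`. -/
theorem filtered_schmidt_witness (d n : ℕ) (hd : 2 ≤ d) (hn : 1 ≤ n) (hnd : n < d)
    (a : Fin d → ℝ) (ha : ∀ i, 0 ≤ a i) (hnorm : ∑ i, a i ^ 2 = 1) :
    ∀ σ : Matrix (Fin d × Fin d) (Fin d × Fin d) ℂ, σ.PosSemidef →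
      SchmidtNumberLE d σ n →
      (1 / (n : ℝ)) * (star (ketDiag d a) ⬝ᵥ σ.mulVec (ketDiag d a)).re ≤
        ((σ * Matrix.diagonal
          (fun p : Fin d × Fin d => ((a p.1 * a p.2 : ℝ) : ℂ))).trace).re ∧
      0 ≤ (((Matrix.diagonal (fun p : Fin d × Fin d => ((a p.1 * a p.2 : ℝ) : ℂ)) -
        (1 / (n : ℝ)) • Matrix.vecMulVec (ketDiag d a) (star (ketDiag d a))) *
          σ).trace).re := by
  intro σ _ hσ
  simpa only [abs_of_nonneg (mul_nonneg (ha _) (ha _))] using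
    filtered_schmidt_witness_general hn a hσ
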